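/- arXiv:2001.05882 — 6 statements merged into one kernel-verified Lean document; each statement's English description precedes it below -/
import Mathlib

section
/- Let (B,β) be an endo-module over a commutative ring R and let i ∈ ℤ. The surjection B i → B⁽¹⁾ i = range(β i) given by β i carries range(β (i−1)) into range(β⁽¹⁾ (i−1)), hence induces a surjection C i → C⁽¹⁾ i; the kernel of this induced surjection is exactly the image of the differential δ i : A i → C i. Consequently C⁽¹⁾ i ≅ coker(δ i). -/
/-!
Since `β⁽¹⁾` restricts `β`, the submodule `range (β⁽¹⁾ (i-1))` is the image of `range (β (i-1))`
under `β i : B i → B⁽¹⁾ i`. When a linear map `f` induces `M ⧸ p → M₂ ⧸ f(p)`, a class dies exactly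
if it has a representative in `f⁻¹(f(p)) = p + ker f`, so the kernel of the induced map is the image
of `ker f` in `M ⧸ p`. For `f = β i` this image is `range (δ i)`.
-/

universe u

structure EndoModule (R : Type u) [CommRing R] where
  B : ℤ → Type u
  [addCommGroup : ∀ i, AddCommGroup (B i)]
  [module : ∀ i, Module R (B i)]
  β : ∀ i : ℤ, B i →ₗ[R] B (i + 1)

attribute [instance] EndoModule.addCommGroup EndoModule.module

namespace EndoModule

variable {R : Type u} [CommRing R]

/-- The derived endo-module: `B⁽¹⁾ i = range (β i) ⊆ B (i+1)`, with
`β⁽¹⁾ i` the restriction of `β (i+1)`. -/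
def derive (E : EndoModule R) : EndoModule R where
  B i := LinearMap.range (E.β i)
  β i := (E.β (i + 1)).restrict fun x _ => LinearMap.mem_range_self _ x

/-- `Ck E i` is the cokernel of `β i`, i.e. the module `C (i+1)` of the paper. -/
abbrev Ck (E : EndoModule R) (i : ℤ) :=
  E.B (i + 1) ⧸ LinearMap.range (E.β i)

/-- The differential `δ (i+1) : A (i+1) → C (i+1)`. -/
def delta (E : EndoModule R) (i : ℤ) :
    LinearMap.ker (E.β (i + 1)) →ₗ[R] E.Ck i :=
  (LinearMap.range (E.β i)).mkQ ∘ₗ (LinearMap.ker (E.β (i + 1))).subtype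

/-- The natural surjection `C (i+1) → C⁽¹⁾ (i+1)` induced by `β (i+1)`. -/
def qmap (E : EndoModule R) (i : ℤ) : E.Ck i →ₗ[R] (derive E).Ck i :=
  Submodule.mapQ _ _ ((E.β (i + 1)).rangeRestrict)
    (by
      rintro x ⟨y, rfl⟩
      exact ⟨⟨E.β i y, ⟨y, rfl⟩⟩, rfl⟩)

section Quotient

variable {S S₂ M M₂ : Type*} [Ring S] [Ring S₂] [AddCommGroup M] [AddCommGroup M₂]
  [Module S M] [Module S₂ M₂] {σ : S →+* S₂}
  {p : Submodule S M} {q : Submodule S₂ M₂} {f : M →ₛₗ[σ] M₂}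

theorem mapQ_surjective (hf : Function.Surjective f) (h : p ≤ q.comap f) :
    Function.Surjective (p.mapQ q f h) :=
  .of_comp (g := p.mkQ) (q.mkQ_surjective.comp hf)

theorem ker_mapQ_of_map_eq [RingHomSurjective σ] (h : p.map f = q) :
    LinearMap.ker (p.mapQ q f (Submodule.map_le_iff_le_comap.1 h.le)) =
      (LinearMap.ker f).map p.mkQ := by
  subst h
  rw [Submodule.ker_mapQ, Submodule.comap_map_eq, Submodule.map_sup, Submodule.mkQ_map_self,
    bot_sup_eq]

end Quotient

theorem range_derive_β (E : EndoModule R) (i : ℤ) :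
    LinearMap.range ((derive E).β i) =
      (LinearMap.range (E.β i)).map (E.β (i + 1)).rangeRestrict :=
  LinearMap.range_domRestrict (LinearMap.range (E.β i)) (E.β (i + 1)).rangeRestrict

theorem range_delta (E : EndoModule R) (i : ℤ) :
    LinearMap.range (E.delta i) =
      (LinearMap.ker (E.β (i + 1))).map (LinearMap.range (E.β i)).mkQ :=
  LinearMap.range_domRestrict _ _

theorem qmap_surjective (E : EndoModule R) (i : ℤ) : Function.Surjective (E.qmap i) :=
  mapQ_surjective (E.β (i + 1)).surjective_rangeRestrict _

theorem ker_qmap (E : EndoModule R) (i : ℤ) :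
    LinearMap.ker (E.qmap i) = LinearMap.range (E.delta i) :=
  calc
    LinearMap.ker (E.qmap i) =
        (LinearMap.ker (E.β (i + 1)).rangeRestrict).map (LinearMap.range (E.β i)).mkQ :=
      ker_mapQ_of_map_eq (range_derive_β E i).symm
    _ = LinearMap.range (E.delta i) := by rw [LinearMap.ker_rangeRestrict, range_delta]

/-- The isomorphism `coker (δ (i+1)) ≅ C⁽¹⁾ (i+1)` induced by `qmap`. -/
noncomputable def cokerDeltaEquiv (E : EndoModule R) (i : ℤ) :
    (E.Ck i ⧸ LinearMap.range (E.delta i)) ≃ₗ[R] (derive E).Ck i :=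
  (Submodule.quotEquivOfEq _ _ (ker_qmap E i).symm).trans
    ((E.qmap i).quotKerEquivOfSurjective (qmap_surjective E i))

/-- For an endo-module `(B, β)` over a commutative ring `R` and `i ∈ ℤ`,
the surjection `B (i+1) → B⁽¹⁾ (i+1) = range (β (i+1))` given by `β (i+1)` carries
`range (β i)` into `range (β⁽¹⁾ i)` (this is the well-definedness of `qmap`), hence
induces a surjection `C (i+1) → C⁽¹⁾ (i+1)`; its kernel is exactly the image of the
differential `δ (i+1) : A (i+1) → C (i+1)`. Consequently `C⁽¹⁾ (i+1) ≅ coker (δ (i+1))`. -/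
theorem qmap_surjective_ker_eq_range_delta
    {R : Type u} [CommRing R] (E : EndoModule R) (i : ℤ) :
    Function.Surjective (E.qmap i) ∧
    LinearMap.ker (E.qmap i) = LinearMap.range (E.delta i) ∧
    Nonempty ((derive E).Ck i ≃ₗ[R] (E.Ck i ⧸ LinearMap.range (E.delta i))) := by
  exact ⟨qmap_surjective E i, ker_qmap E i, ⟨(cokerDeltaEquiv E i).symm⟩⟩

end EndoModule
end

section
/- Let (B,β) be an endo-module over a commutative ring R, let d ∈ ℤ, and suppose (B,β) is d-stable. Then for all integers i and s ≥ 0 with i + s ≥ d, the canonical surjection ε⁽ˢ⁾ i : C⁽ˢ⁾ i → H_(i/i−1) is an isomorphism. -/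
universe u

namespace EndoModule

variable {R : Type u} [CommRing R]

/-- A cocone over the direct system `⋯ → B i → B (i+1) → ⋯`. -/
def IsCocone (E : EndoModule R) {H : Type u} [AddCommGroup H] [Module R H]
    (h : ∀ i, E.B i →ₗ[R] H) : Prop :=
  ∀ i x, h (i + 1) (E.β i x) = h i x

/-- `(H, h)` is the colimit `H(B) = colim B i` of the direct system along the maps `β`. -/
def IsColimit (E : EndoModule R) {H : Type u} [AddCommGroup H] [Module R H]
    (h : ∀ i, E.B i →ₗ[R] H) : Prop :=
  IsCocone E h ∧
    ∀ (H' : Type u) [AddCommGroup H'] [Module R H'] (h' : ∀ i, E.B i →ₗ[R] H'),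
      IsCocone E h' → ∃! f : H →ₗ[R] H', ∀ i x, f (h i x) = h' i x


/-- The cocone over the derived endo-module induced by a cocone over `E`
(`h⁽¹⁾ i` is `h (i+1)` restricted to `range (β i) ⊆ B (i+1)`). -/
def deriveCocone (E : EndoModule R) {H : Type u} [AddCommGroup H] [Module R H]
    (h : ∀ i, E.B i →ₗ[R] H) : ∀ i, (derive E).B i →ₗ[R] H :=
  fun i => h (i + 1) ∘ₗ (LinearMap.range (E.β i)).subtype

lemma deriveCocone_isCocone {E : EndoModule R} {H : Type u} [AddCommGroup H] [Module R H]
    {h : ∀ i, E.B i →ₗ[R] H} (hc : IsCocone E h) :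
    IsCocone (derive E) (deriveCocone E h) :=
  fun i x => hc (i + 1) x.val

/-- The cocone over the `s`-th derivative induced by a cocone over `E`. -/
def iterCocone {H : Type u} [AddCommGroup H] [Module R H] :
    (s : ℕ) → (E : EndoModule R) → (h : ∀ i, E.B i →ₗ[R] H) →
      ∀ i, (derive^[s] E).B i →ₗ[R] H
  | 0, _, h => h
  | s + 1, E, h => iterCocone s (derive E) (deriveCocone E h)

lemma iterCocone_isCocone {H : Type u} [AddCommGroup H] [Module R H] :
    ∀ (s : ℕ) (E : EndoModule R) (h : ∀ i, E.B i →ₗ[R] H),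
      IsCocone E h → IsCocone (derive^[s] E) (iterCocone s E h)
  | 0, _, _, hc => hc
  | s + 1, E, h, hc => iterCocone_isCocone s (derive E) _ (deriveCocone_isCocone hc)

lemma range_deriveCocone {E : EndoModule R} {H : Type u} [AddCommGroup H] [Module R H]
    {h : ∀ i, E.B i →ₗ[R] H} (hc : IsCocone E h) (i : ℤ) :
    LinearMap.range (deriveCocone E h i) = LinearMap.range (h i) := by
  apply le_antisymm
  · rintro x ⟨y, rfl⟩
    obtain ⟨z, hz⟩ := y.2
    refine ⟨z, ?_⟩
    show h i z = h (i + 1) y.val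
    rw [← hz, hc i z]
  · rintro x ⟨y, rfl⟩
    exact ⟨⟨E.β i y, ⟨y, rfl⟩⟩, hc i y⟩

lemma range_iterCocone {H : Type u} [AddCommGroup H] [Module R H] :
    ∀ (s : ℕ) (E : EndoModule R) (h : ∀ i, E.B i →ₗ[R] H),
      IsCocone E h → ∀ i, LinearMap.range (iterCocone s E h i) = LinearMap.range (h i)
  | 0, _, _, _, _ => rfl
  | s + 1, E, h, hc, i =>
    (range_iterCocone s (derive E) _ (deriveCocone_isCocone hc) i).trans
      (range_deriveCocone hc i)

lemma iterCocone_comm {H : Type u} [AddCommGroup H] [Module R H] :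
    ∀ (s : ℕ) (E : EndoModule R) (h : ∀ i, E.B i →ₗ[R] H),
      IsCocone E h → ∀ (i : ℤ) (x : (derive^[s] E).B i),
        iterCocone s E h (i + 1) ((derive^[s] E).β i x) = iterCocone s E h i x
  | 0, _, _, hc, i, x => hc i x
  | s + 1, E, h, hc, i, x =>
    iterCocone_comm s (derive E) _ (deriveCocone_isCocone hc) i x

/-- The canonical map `ε⁽ˢ⁾ (i+1) : C⁽ˢ⁾ (i+1) → H / H_(i)` (whose image is
`H_(i+1/i)`), using the identification `H⁽ˢ⁾_(i) = H_(i)` of filtrations. -/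
def epsIter (s : ℕ) (E : EndoModule R) {H : Type u} [AddCommGroup H] [Module R H]
    (h : ∀ i, E.B i →ₗ[R] H) (hc : IsCocone E h) (i : ℤ) :
    (derive^[s] E).Ck i →ₗ[R] H ⧸ LinearMap.range (h i) :=
  Submodule.mapQ _ _ (iterCocone s E h (i + 1))
    (by
      rintro x ⟨y, rfl⟩
      show iterCocone s E h (i + 1) _ ∈ LinearMap.range (h i)
      rw [iterCocone_comm s E h hc i y, ← range_iterCocone s E h hc i]
      exact LinearMap.mem_range_self _ y)

/-- The natural surjection `C⁽ˢ⁾ (i+1) → C⁽ˢ⁺¹⁾ (i+1)`. -/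
def qStep : (s : ℕ) → (E : EndoModule R) → (i : ℤ) →
    ((derive^[s] E).Ck i →ₗ[R] (derive^[s + 1] E).Ck i)
  | 0, E, i => qmap E i
  | s + 1, E, i => qStep s (derive E) i

/-- The composite natural surjection `C (i+1) → C⁽ˢ⁾ (i+1)`. -/
def qIter : (s : ℕ) → (E : EndoModule R) → (i : ℤ) →
    (E.Ck i →ₗ[R] (derive^[s] E).Ck i)
  | 0, _, _ => LinearMap.id
  | s + 1, E, i => qIter s (derive E) i ∘ₗ qmap E i

/-!
Since `B⁽ˢ⁾ (i+1) → H` carries the range of `β⁽ˢ⁾ i` onto `H_(i)`, the preimage of `H_(i)` is that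
range plus the kernel of `B⁽ˢ⁾ (i+1) → H`. This map is a restriction of `B (i+1+s) → H`, because
`B⁽ˢ⁾ (i+1)` is the image of `B (i+1)` in `B (i+1+s)`. In a direct limit an element dies only if
some transition map kills it, and all transition maps out of `B (i+1+s)` are injective once
`d ≤ i+1+s`.
-/

section Transition

variable (E : EndoModule R)

/-- The composite `β (m-1) ∘ ⋯ ∘ β k : B k → B m`, which makes the family `B` a directed system of
modules in the sense of Mathlib. -/
noncomputable def transition (k m : ℤ) (hkm : k ≤ m) : E.B k →ₗ[R] E.B m :=
  Int.leInduction (motive := fun m _ ↦ E.B k →ₗ[R] E.B m) LinearMap.id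
    (fun n _ f ↦ E.β n ∘ₗ f) m hkm

lemma transition_self (k : ℤ) : E.transition k k le_rfl = LinearMap.id :=
  Int.leInduction_base ..

lemma transition_add_one (k m : ℤ) (hkm : k ≤ m) :
    E.transition k (m + 1) (by lia) = E.β m ∘ₗ E.transition k m hkm :=
  Int.leInduction_add_one ..

lemma transition_comp_transition (k l m : ℤ) (hkl : k ≤ l) (hlm : l ≤ m) :
    E.transition l m hlm ∘ₗ E.transition k l hkl = E.transition k m (hkl.trans hlm) := by
  induction m, hlm using Int.leInduction with
  | base => rw [transition_self, LinearMap.id_comp]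
  | succ n hln ih =>
    rw [transition_add_one E l n hln, transition_add_one E k n (hkl.trans hln),
      LinearMap.comp_assoc, ih]

instance : DirectedSystem E.B (E.transition · · ·) where
  map_self k := LinearMap.congr_fun (E.transition_self k)
  map_map m l k hkl hlm := LinearMap.congr_fun (E.transition_comp_transition k l m hkl hlm)

variable {E}

lemma transition_injective {k m : ℤ} (hker : ∀ j, k ≤ j → LinearMap.ker (E.β j) = ⊥)
    (hkm : k ≤ m) : Function.Injective (E.transition k m hkm) := by
  induction m, hkm using Int.leInduction with
  | base => rw [transition_self]; exact Function.injective_id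
  | succ n hkn ih =>
    rw [transition_add_one E k n hkn]
    exact (LinearMap.ker_eq_bot.1 (hker n hkn)).comp ih

end Transition

section Cocone

variable {E : EndoModule R} {H : Type u} [AddCommGroup H] [Module R H] {h : ∀ i, E.B i →ₗ[R] H}

lemma isCocone_directLimit_of (E : EndoModule R) :
    IsCocone E (Module.DirectLimit.of R ℤ E.B E.transition) := by
  intro k x
  have hβ : E.transition k (k + 1) (by lia) x = E.β k x := by
    rw [transition_add_one E k k le_rfl, transition_self, LinearMap.comp_id]
  rw [← hβ, Module.DirectLimit.of_f]

lemma IsColimit.exists_transition_eq_zero (hcol : IsColimit E h) {k : ℤ} {x : E.B k}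
    (hx : h k x = 0) : ∃ (m : ℤ) (hkm : k ≤ m), E.transition k m hkm x = 0 := by
  obtain ⟨f, hf, -⟩ := hcol.2 _ _ E.isCocone_directLimit_of
  apply Module.DirectLimit.of.zero_exact (R := R)
  rw [← hf, hx, map_zero]

lemma IsColimit.injective (hcol : IsColimit E h) {k : ℤ}
    (hker : ∀ j, k ≤ j → LinearMap.ker (E.β j) = ⊥) : Function.Injective (h k) := by
  rw [injective_iff_map_eq_zero]
  intro x hx
  obtain ⟨m, hkm, hm⟩ := hcol.exists_transition_eq_zero hx
  exact (map_eq_zero_iff _ (transition_injective hker hkm)).1 hm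

lemma IsCocone.map_range (hc : IsCocone E h) (i : ℤ) :
    (LinearMap.range (E.β i)).map (h (i + 1)) = LinearMap.range (h i) := by
  rw [← LinearMap.range_comp]
  exact congrArg LinearMap.range (LinearMap.ext (hc i))

lemma iterCocone_injective (s : ℕ) {k : ℤ} (hinj : Function.Injective (h (k + s))) :
    Function.Injective (iterCocone s E h k) := by
  induction s generalizing E with
  | zero =>
    rw [Nat.cast_zero, add_zero] at hinj
    exact hinj
  | succ s ih =>
    rw [Nat.cast_succ, ← add_assoc] at hinj
    exact ih (E := derive E) (h := deriveCocone E h) (hinj.comp Subtype.val_injective)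

lemma ker_epsIter (s : ℕ) (hc : IsCocone E h) (i : ℤ) :
    LinearMap.ker (epsIter s E h hc i) =
      (LinearMap.ker (iterCocone s E h (i + 1))).map
        (LinearMap.range ((derive^[s] E).β i)).mkQ := by
  rw [epsIter, Submodule.ker_mapQ, ← range_iterCocone s E h hc i,
    ← (iterCocone_isCocone s E h hc).map_range i, Submodule.comap_map_eq, Submodule.map_sup,
    Submodule.mkQ_map_self, bot_sup_eq]

lemma range_epsIter (s : ℕ) (hc : IsCocone E h) (i : ℤ) :
    LinearMap.range (epsIter s E h hc i) =
      (LinearMap.range (h (i + 1))).map (LinearMap.range (h i)).mkQ := by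
  rw [epsIter, Submodule.range_mapQ, range_iterCocone s E h hc]

lemma epsIter_injective (s : ℕ) (hc : IsCocone E h) (i : ℤ)
    (hinj : Function.Injective (h (i + 1 + s))) : Function.Injective (epsIter s E h hc i) := by
  rw [← LinearMap.ker_eq_bot, ker_epsIter,
    LinearMap.ker_eq_bot.2 (iterCocone_injective s hinj), Submodule.map_bot]

end Cocone

/-- Let `(B, β)` be a `d`-stable endo-module over a commutative ring `R`,
and let `(H, h)` be the colimit of the system. Then for all `i` and `s ≥ 0` with
`(i + 1) + s ≥ d`, the canonical surjection `ε⁽ˢ⁾ (i+1) : C⁽ˢ⁾ (i+1) → H_(i+1/i)` is an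
isomorphism: it is injective, and its range is the image of `H_(i+1)` in `H/H_(i)`.
(Here `Ck _ i` denotes the cokernel `C (i+1)`, whence the index shift.) -/
theorem epsIter_bijective_of_stable
    {R : Type u} [CommRing R] (E : EndoModule R) (d : ℤ)
    (hstab : ∀ i : ℤ, d ≤ i → LinearMap.ker (E.β i) = ⊥)
    {H : Type u} [AddCommGroup H] [Module R H]
    (h : ∀ i, E.B i →ₗ[R] H) (hcol : IsColimit E h)
    (i : ℤ) (s : ℕ) (his : d ≤ i + 1 + s) :
    Function.Injective (epsIter s E h hcol.1 i) ∧
    LinearMap.range (epsIter s E h hcol.1 i) =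
      Submodule.map (LinearMap.range (h i)).mkQ (LinearMap.range (h (i + 1))) := by
  have hinj : Function.Injective (h (i + 1 + s)) :=
    hcol.injective fun j hj ↦ hstab j (his.trans hj)
  exact ⟨epsIter_injective s hcol.1 i hinj, range_epsIter s hcol.1 i⟩

end EndoModule
end

section
/- Let (B,β) be an endo-module over a commutative ring R that is stable and bounded below. Then there exists s₀ ≥ 0 such that for every s ≥ s₀ the s-th derivative B⁽ˢ⁾ is degenerate, i.e., all its structure maps β⁽ˢ⁾ i are injective. -/
universe u

namespace EndoModule

variable {R : Type u} [CommRing R]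

/-- `d`-stability: the kernels `A i = ker (β i)` vanish in all degrees `i ≥ d`. -/
def IsStableFrom (E : EndoModule R) (d : ℤ) : Prop :=
  ∀ i, d ≤ i → LinearMap.ker (E.β i) = ⊥

/-- Boundedness below, with explicit bound `n`: the modules `B i` vanish in all degrees `i < n`,
expressed as `Subsingleton (B i)`. -/
def IsBoundedBelowBy (E : EndoModule R) (n : ℤ) : Prop :=
  ∀ i, i < n → Subsingleton (E.B i)

/-- Degeneracy: all structure maps `β i` are injective. -/
def IsDegenerate (E : EndoModule R) : Prop :=
  ∀ i, Function.Injective (E.β i)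

variable {E : EndoModule R} {d n : ℤ}

theorem injective_derive_β_iff {i : ℤ} : Function.Injective (E.derive.β i) ↔
    Disjoint (LinearMap.range (E.β i)) (LinearMap.ker (E.β (i + 1))) :=
  LinearMap.injective_restrict_iff fun x _ => LinearMap.mem_range_self _ x

protected theorem IsStableFrom.derive (h : E.IsStableFrom d) :
    E.derive.IsStableFrom (d - 1) := by
  intro i hi
  rw [LinearMap.ker_eq_bot, injective_derive_β_iff, h (i + 1) (by lia)]
  exact disjoint_bot_right

theorem IsStableFrom.derive_iterate (h : E.IsStableFrom d) (s : ℕ) :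
    (derive^[s] E).IsStableFrom (d - s) := by
  induction s with
  | zero => simpa using h
  | succ s ih =>
    rw [Function.iterate_succ_apply', Nat.cast_succ, ← sub_sub]
    exact ih.derive

theorem subsingleton_derive_B {i : ℤ} [Subsingleton (E.B i)] : Subsingleton (E.derive.B i) :=
  (E.β i).surjective_rangeRestrict.subsingleton

protected theorem IsBoundedBelowBy.derive (h : E.IsBoundedBelowBy n) :
    E.derive.IsBoundedBelowBy n :=
  fun i hi =>
    have := h i hi
    subsingleton_derive_B

theorem IsBoundedBelowBy.derive_iterate (h : E.IsBoundedBelowBy n) (s : ℕ) :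
    (derive^[s] E).IsBoundedBelowBy n :=
  Function.Iterate.rec (fun F : EndoModule R => F.IsBoundedBelowBy n) h (fun _ hF => hF.derive) s

theorem IsStableFrom.isDegenerate (hd : E.IsStableFrom d) (hn : E.IsBoundedBelowBy n)
    (hdn : d ≤ n) : E.IsDegenerate := by
  intro i
  rcases lt_or_ge i n with hi | hi
  · have := hn i hi
    exact Function.injective_of_subsingleton _
  · exact LinearMap.ker_eq_bot.mp (hd i (hdn.trans hi))

/-- Let `(B, β)` be an endo-module over a commutative ring `R` which is
stable (i.e. `d`-stable for some `d`: `ker (β i) = 0` for all `i ≥ d`) and bounded below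
(i.e. `B i = 0` for all `i` smaller than some `n`). Then there exists `s₀ ≥ 0` such that
for every `s ≥ s₀` the `s`-th derivative `B⁽ˢ⁾` is degenerate, i.e. all its structure maps
`β⁽ˢ⁾ i` are injective. -/
theorem derive_iterate_degenerate_of_stable_boundedBelow
    {R : Type u} [CommRing R] (E : EndoModule R)
    (hstab : ∃ d : ℤ, ∀ i : ℤ, d ≤ i → LinearMap.ker (E.β i) = ⊥)
    (hbb : ∃ n : ℤ, ∀ i : ℤ, i < n → ∀ x : E.B i, x = 0) :
    ∃ s₀ : ℕ, ∀ s : ℕ, s₀ ≤ s → ∀ i : ℤ, Function.Injective ((derive^[s] E).β i) := by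
  obtain ⟨d, hd : E.IsStableFrom d⟩ := hstab
  obtain ⟨n, hn⟩ := hbb
  have hbound : E.IsBoundedBelowBy n := fun i hi => subsingleton_of_forall_eq 0 (hn i hi)
  refine ⟨(d - n).toNat, fun s hs => ?_⟩
  have hdn : d - s ≤ n := by lia
  exact (hd.derive_iterate s).isDegenerate (hbound.derive_iterate s) hdn

end EndoModule
end

section
/- Let (B,β) be an endo-module over a commutative ring R. If (B,β) is degenerate, then the canonical surjection ε i : C i → H_(i/i−1) is an isomorphism for every i ∈ ℤ. Conversely, if (B,β) is bounded below and ε i is an isomorphism for every i ∈ ℤ, then (B,β) is degenerate. -/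
/-!
The map `ε (i+1)` is induced by `h (i+1)`, and the image of `h i` is the image of `β i` under
`h (i+1)`, so `ε (i+1)` is injective if and only if `ker (h (i+1)) ⊆ range (β i)`.

If every `β i` is injective, then so is every `h i`. To see this, write the colimit as the cokernel
of `s - 1` on `⨁ i, B i`, where `s` is the shift induced by `β`. For `y ≠ 0` with lowest degree `l`
and highest degree `k`, the element `s y - y` has nonzero components in the distinct degrees `l` and
`k + 1`. Thus no nonzero homogeneous element is killed in the cokernel.

Conversely, since `h i = h (i+1) ∘ β i`, the inclusion `ker (h (i+1)) ⊆ range (β i)` gives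
`ker (h (i+1)) = β i (ker (h i))`. Injectivity of the maps `h i` therefore propagates upwards from
the range where `B` vanishes, and it forces injectivity of the maps `β i`.
-/

universe u

namespace EndoModule

variable {R : Type u} [CommRing R]

/-- The canonical map `ε (i+1) : C (i+1) → H / H_(i)` (whose image is
`H_(i+1/i) = H_(i+1)/H_(i)`). -/
def eps (E : EndoModule R) {H : Type u} [AddCommGroup H] [Module R H]
    (h : ∀ i, E.B i →ₗ[R] H) (hc : IsCocone E h) (i : ℤ) :
    E.Ck i →ₗ[R] H ⧸ LinearMap.range (h i) :=
  Submodule.mapQ _ _ (h (i + 1))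
    (by
      rintro x ⟨y, rfl⟩
      exact ⟨y, (hc i y).symm⟩)

/-- The canonical map `ε⁽¹⁾ (i+1) : C⁽¹⁾ (i+1) → H / H_(i)`, using the identification
`H⁽¹⁾_(i) = H_(i)` of the filtration of the colimit of the derived endo-module. -/
def epsD (E : EndoModule R) {H : Type u} [AddCommGroup H] [Module R H]
    (h : ∀ i, E.B i →ₗ[R] H) (hc : IsCocone E h) (i : ℤ) :
    (derive E).Ck i →ₗ[R] H ⧸ LinearMap.range (h i) :=
  Submodule.mapQ _ _ ((h (i + 1 + 1)) ∘ₗ (LinearMap.range (E.β (i + 1))).subtype)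
    (by
      rintro x ⟨y, rfl⟩
      obtain ⟨z, hz⟩ := y.2
      refine ⟨z, ?_⟩
      show h i z = h (i + 1 + 1) (E.β (i + 1) y.val)
      rw [hc (i + 1) y.val, ← hz, hc i z])

section Cocone

variable {E : EndoModule R} {H : Type u} [AddCommGroup H] [Module R H] {h : ∀ i, E.B i →ₗ[R] H}

theorem IsCocone.comp_β (hc : IsCocone E h) (i : ℤ) : h (i + 1) ∘ₗ E.β i = h i :=
  LinearMap.ext (hc i)

theorem IsCocone.β_injective (hc : IsCocone E h) {i : ℤ} (hi : Function.Injective (h i)) :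
    Function.Injective (E.β i) := by
  rw [← hc.comp_β i, LinearMap.coe_comp] at hi
  exact hi.of_comp

theorem range_eps (hc : IsCocone E h) (i : ℤ) :
    LinearMap.range (E.eps h hc i) =
      Submodule.map (LinearMap.range (h i)).mkQ (LinearMap.range (h (i + 1))) :=
  Submodule.range_mapQ _ _ _ _

theorem eps_injective_iff (hc : IsCocone E h) (i : ℤ) :
    Function.Injective (E.eps h hc i) ↔ LinearMap.ker (h (i + 1)) ≤ LinearMap.range (E.β i) := by
  have hcomap : Submodule.comap (h (i + 1)) (LinearMap.range (h i)) =
      LinearMap.range (E.β i) ⊔ LinearMap.ker (h (i + 1)) := by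
    rw [← hc.comp_β i, LinearMap.range_comp, Submodule.comap_map_eq]
  rw [← LinearMap.ker_eq_bot, eps, Submodule.ker_mapQ, ← LinearMap.le_ker_iff_map,
    Submodule.ker_mkQ, hcomap, sup_le_iff, and_iff_right le_rfl]

theorem IsCocone.ker_succ_eq_map_ker (hc : IsCocone E h) {i : ℤ}
    (hε : Function.Injective (E.eps h hc i)) :
    LinearMap.ker (h (i + 1)) = Submodule.map (E.β i) (LinearMap.ker (h i)) := by
  rw [← hc.comp_β i, LinearMap.ker_comp, Submodule.map_comap_eq,
    inf_eq_right.2 ((eps_injective_iff hc i).1 hε)]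

theorem IsCocone.injective_of_eps_injective (hc : IsCocone E h) {n : ℤ}
    (hn : Function.Injective (h n)) (hε : ∀ i, n ≤ i → Function.Injective (E.eps h hc i)) {i : ℤ}
    (hi : n ≤ i) : Function.Injective (h i) := by
  induction i, hi using Int.leInduction with
  | base => exact hn
  | succ i hi ih =>
    rw [← LinearMap.ker_eq_bot] at ih ⊢
    rw [hc.ker_succ_eq_map_ker (hε i hi), ih, Submodule.map_bot]

theorem IsColimit.injective_of_isCocone (hcol : IsColimit E h) {H' : Type u} [AddCommGroup H']
    [Module R H'] {h' : ∀ i, E.B i →ₗ[R] H'} (hc' : IsCocone E h') {i : ℤ}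
    (hi : Function.Injective (h' i)) : Function.Injective (h i) := by
  obtain ⟨f, hf, -⟩ := hcol.2 H' h' hc'
  have hcomp : f ∘ h i = h' i := funext (hf i)
  rw [← hcomp] at hi
  exact hi.of_comp

end Cocone

section Telescope

open DirectSum

variable (E : EndoModule R)

/-- The endomorphism of `⨁ i, B i`, homogeneous of degree `1`, which is `β i` on `B i`. -/
noncomputable def shift : (⨁ i, E.B i) →ₗ[R] ⨁ i, E.B i :=
  toModule R ℤ _ fun i => lof R ℤ E.B (i + 1) ∘ₗ E.β i

theorem shift_lof (i : ℤ) (x : E.B i) :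
    E.shift (lof R ℤ E.B i x) = lof R ℤ E.B (i + 1) (E.β i x) :=
  toModule_lof R i x

theorem shift_apply_succ (y : ⨁ i, E.B i) (k : ℤ) : E.shift y (k + 1) = E.β k (y k) := by
  induction y using DirectSum.induction_on with
  | zero => simp only [map_zero, DirectSum.zero_apply]
  | of i x =>
    rw [← lof_eq_of R, shift_lof]
    obtain rfl | hik := eq_or_ne k i
    · rw [lof_apply, lof_apply]
    · rw [lof_eq_of, lof_eq_of, of_eq_of_ne _ _ _ hik, map_zero,
        of_eq_of_ne _ _ _ (by simpa using hik)]
  | add y z hy hz => simp only [map_add, DirectSum.add_apply, hy, hz]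

/-- The mapping telescope of `(B, β)`: the cokernel of `shift - 1`, which identifies every `x : B i`
with `β i x`. It is the usual model of the colimit; only its cocone is needed here. -/
abbrev Telescope : Type u :=
  (⨁ i, E.B i) ⧸ LinearMap.range (E.shift - LinearMap.id)

/-- The structure map `B i → Telescope` of the mapping telescope. -/
noncomputable def telescopeι (i : ℤ) : E.B i →ₗ[R] E.Telescope :=
  (LinearMap.range (E.shift - LinearMap.id)).mkQ ∘ₗ lof R ℤ E.B i

theorem isCocone_telescopeι : IsCocone E E.telescopeι := fun i x =>
  (Submodule.Quotient.eq _).2 ⟨lof R ℤ E.B i x, by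
    rw [LinearMap.sub_apply, LinearMap.id_apply, shift_lof]⟩

variable {E}

theorem eq_zero_of_shift_apply_eq (hβ : ∀ i, Function.Injective (E.β i)) {y : ⨁ i, E.B i} (i : ℤ)
    (hy : ∀ k, k ≠ i → E.shift y k = y k) : y = 0 := by
  classical
  by_contra hy0
  have hsupp : y.support.Nonempty :=
    Finset.nonempty_iff_ne_empty.2 (mt DFinsupp.support_eq_empty.1 hy0)
  set l := y.support.min' hsupp
  set k := y.support.max' hsupp
  have hyl : y l ≠ 0 := DFinsupp.mem_support_iff.1 (y.support.min'_mem hsupp)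
  have hyk : y k ≠ 0 := DFinsupp.mem_support_iff.1 (y.support.max'_mem hsupp)
  have hlow : y (l - 1) = 0 := DFinsupp.notMem_support_iff.1 fun hmem => by
    have := y.support.min'_le _ hmem
    omega
  have hhigh : y (k + 1) = 0 := DFinsupp.notMem_support_iff.1 fun hmem => by
    have := y.support.le_max' _ hmem
    omega
  have hli : l = i := by
    by_contra hne
    have hsl := E.shift_apply_succ y (l - 1)
    rw [hlow, map_zero, sub_add_cancel, hy l hne] at hsl
    exact hyl hsl
  have hki : k + 1 = i := by
    by_contra hne
    have hsk := E.shift_apply_succ y k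
    rw [hy (k + 1) hne, hhigh] at hsk
    exact hyk ((injective_iff_map_eq_zero (E.β k)).1 (hβ k) _ hsk.symm)
  have hlk : l ≤ k := y.support.min'_le_max' hsupp
  omega

theorem telescopeι_injective (hβ : ∀ i, Function.Injective (E.β i)) (i : ℤ) :
    Function.Injective (E.telescopeι i) := by
  rw [injective_iff_map_eq_zero]
  intro x hx
  obtain ⟨y, hy⟩ : lof R ℤ E.B i x ∈ LinearMap.range (E.shift - LinearMap.id) :=
    (Submodule.Quotient.mk_eq_zero _).1 hx
  have hy0 : y = 0 := eq_zero_of_shift_apply_eq hβ i fun k hk => by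
    rw [← sub_eq_zero, ← of_eq_of_ne i k x hk, ← lof_eq_of R, ← hy]
    rfl
  rw [hy0, map_zero, lof_eq_of] at hy
  exact of_injective i (hy.symm.trans (map_zero _).symm)

end Telescope

theorem IsColimit.injective_s9 {E : EndoModule R} {H : Type u} [AddCommGroup H] [Module R H]
    {h : ∀ i, E.B i →ₗ[R] H} (hcol : IsColimit E h) (hβ : ∀ i, Function.Injective (E.β i))
    (i : ℤ) : Function.Injective (h i) :=
  hcol.injective_of_isCocone E.isCocone_telescopeι (telescopeι_injective hβ i)

/-- Let `(B, β)` be an endo-module over a commutative ring `R` and let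
`(H, h)` be the colimit of the system. If `(B, β)` is degenerate (all `β i` injective),
then the canonical surjection `ε (i+1) : C (i+1) → H_(i+1/i)` is an isomorphism for every
`i` (injective, with range the image of `H_(i+1)` in `H/H_(i)`). Conversely, if `(B, β)`
is bounded below and every `ε (i+1)` is an isomorphism, then `(B, β)` is degenerate. -/
theorem degenerate_iff_eps_iso
    {R : Type u} [CommRing R] (E : EndoModule R)
    {H : Type u} [AddCommGroup H] [Module R H]
    (h : ∀ i, E.B i →ₗ[R] H) (hcol : IsColimit E h) :
    ((∀ i : ℤ, Function.Injective (E.β i)) →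
      ∀ i : ℤ, Function.Injective (E.eps h hcol.1 i) ∧
        LinearMap.range (E.eps h hcol.1 i) =
          Submodule.map (LinearMap.range (h i)).mkQ (LinearMap.range (h (i + 1)))) ∧
    ((∃ n : ℤ, ∀ i : ℤ, i < n → ∀ x : E.B i, x = 0) →
      (∀ i : ℤ, Function.Injective (E.eps h hcol.1 i) ∧
        LinearMap.range (E.eps h hcol.1 i) =
          Submodule.map (LinearMap.range (h i)).mkQ (LinearMap.range (h (i + 1)))) →
      ∀ i : ℤ, Function.Injective (E.β i)) := by
  constructor
  · intro hβ i
    refine ⟨(eps_injective_iff hcol.1 i).2 ?_, range_eps hcol.1 i⟩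
    rw [LinearMap.ker_eq_bot.2 (hcol.injective_s9 hβ (i + 1))]
    exact bot_le
  · rintro ⟨n, hzero⟩ hε i
    have hlow : ∀ j < n, Function.Injective (h j) := fun j hj x y _ =>
      (hzero j hj x).trans (hzero j hj y).symm
    have hmin : Function.Injective (h (min i (n - 1))) := hlow _ (by omega)
    exact hcol.1.β_injective <|
      hcol.1.injective_of_eps_injective hmin (fun j _ => (hε j).1) (min_le_left i (n - 1))

end EndoModule
end

section
/- Let p be an odd prime and s a positive integer divisible by p − 1. Then: (i) for every integer k > 1 not divisible by p, the p-adic valuation satisfies v_p(k^s − 1) ≥ v_p(s) + 1; and (ii) there exists an integer k > 1 not divisible by p such that v_p(k^s − 1) = v_p(s) + 1. -/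
/-!
Write `v = v_p s`. The totient `φ (p ^ (v + 1)) = p ^ v * (p - 1)` divides `s`, because its two
factors are coprime and both divide `s`; Euler's theorem then gives `k ^ s ≡ 1 [MOD p ^ (v + 1)]`.
Equality is attained at `k = p + 1`, by the lifting the exponent lemma.
-/

theorem dvd_pow_sub_one_of_totient_dvd {n k s : ℕ} (hk : k.Coprime n) (hs : n.totient ∣ s) :
    n ∣ k ^ s - 1 := by
  obtain ⟨t, rfl⟩ := hs
  have euler : k ^ (n.totient * t) ≡ 1 [MOD n] := by
    simpa only [pow_mul, one_pow] using (Nat.ModEq.pow_totient hk).pow t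
  exact Nat.dvd_of_mod_eq_zero (Nat.sub_mod_eq_zero_of_mod_eq euler)

section

variable {p s : ℕ} [hp : Fact p.Prime]

theorem totient_prime_pow_padicValNat_add_one_dvd (hs : p - 1 ∣ s) :
    (p ^ (padicValNat p s + 1)).totient ∣ s := by
  rw [Nat.totient_prime_pow_succ hp.out]
  have coprime_sub_one : p.Coprime (p - 1) :=
    (Nat.coprime_self_sub_right hp.out.one_le).2 (Nat.coprime_one_right p)
  exact (coprime_sub_one.pow_left _).mul_dvd_of_dvd_of_dvd pow_padicValNat_dvd hs

theorem padicValNat_add_one_le_padicValNat_pow_sub_one {k : ℕ} (hs₀ : s ≠ 0) (hs : p - 1 ∣ s)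
    (hk : 1 < k) (hpk : ¬p ∣ k) : padicValNat p s + 1 ≤ padicValNat p (k ^ s - 1) := by
  have sub_one_ne_zero : k ^ s - 1 ≠ 0 := Nat.sub_ne_zero_of_lt (Nat.one_lt_pow hs₀ hk)
  have coprime : k.Coprime (p ^ (padicValNat p s + 1)) :=
    ((hp.out.coprime_iff_not_dvd.2 hpk).pow_left _).symm
  exact (padicValNat_dvd_iff_le sub_one_ne_zero).1
    (dvd_pow_sub_one_of_totient_dvd coprime (totient_prime_pow_padicValNat_add_one_dvd hs))

theorem padicValNat_pow_sub_one_of_dvd_sub_one {x : ℕ} (hodd : Odd p) (hx : 1 < x)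
    (hpx : p ∣ x - 1) (hs : s ≠ 0) :
    padicValNat p (x ^ s - 1) = padicValNat p (x - 1) + padicValNat p s := by
  have not_dvd : ¬p ∣ x := fun h =>
    hp.out.not_dvd_one ((Nat.dvd_sub_iff_right hx.le h).1 hpx)
  simpa only [one_pow] using padicValNat.pow_sub_pow hodd hx hpx not_dvd hs

end

/-- Let `p` be an odd prime and `s` a positive integer divisible by
`p - 1`. Then: (i) for every integer `k > 1` not divisible by `p`, the `p`-adic valuation
satisfies `v_p (k ^ s - 1) ≥ v_p s + 1`; and (ii) there exists an integer `k > 1` not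
divisible by `p` with `v_p (k ^ s - 1) = v_p s + 1`. -/
theorem padicValNat_pow_sub_one_of_sub_one_dvd
    (p : ℕ) (hp : p.Prime) (hodd : Odd p) (s : ℕ) (hs : 0 < s) (hdvd : (p - 1) ∣ s) :
    (∀ k : ℕ, 1 < k → ¬ p ∣ k →
      padicValNat p s + 1 ≤ padicValNat p (k ^ s - 1)) ∧
    (∃ k : ℕ, 1 < k ∧ ¬ p ∣ k ∧
      padicValNat p (k ^ s - 1) = padicValNat p s + 1) := by
  have : Fact p.Prime := ⟨hp⟩
  have one_lt : 1 < p + 1 := Nat.lt_add_of_pos_left hp.pos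
  have not_dvd : ¬p ∣ p + 1 := fun h => hp.not_dvd_one ((Nat.dvd_add_right dvd_rfl).1 h)
  refine ⟨fun k => padicValNat_add_one_le_padicValNat_pow_sub_one hs.ne' hdvd,
    p + 1, one_lt, not_dvd, ?_⟩
  calc padicValNat p ((p + 1) ^ s - 1)
      = padicValNat p (p + 1 - 1) + padicValNat p s :=
        padicValNat_pow_sub_one_of_dvd_sub_one hodd one_lt dvd_rfl hs.ne'
    _ = padicValNat p s + 1 := by rw [Nat.add_sub_cancel, padicValNat_self, add_comm]
end

section
/- Let i be a nonnegative integer. For each integer k > 1 set r_k = k · ∏_{j=1}^{i} (k^j − 1). Then the elements r_k, for all integers k > 1, generate the unit ideal of the ring ℤ[1/(i+1)!]. Equivalently, for every prime p > i + 1 there exists an integer k > 1 such that p does not divide k · ∏_{j=1}^{i} (k^j − 1). -/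
/-!
Since `ℤ` is a Jacobson ring, an ideal of `ℤ` becomes the unit ideal of `ℤ[1/n!]` exactly when every
maximal ideal `(p)` containing it also contains `n!`, that is, when it lies in no `(p)` with
`p > n`. For `r_k = k * ∏_{j=1}^{i} (k^j - 1)` and a prime `p > i + 1`, let `k` be a primitive root
modulo `p`: its order `p - 1` exceeds `i`, so no factor of `r_k` vanishes modulo `p`.
-/

section Localization

variable {R : Type*} [CommRing R]

theorem map_away_eq_top_iff_mem_radical (a : R) (A : Type*) [CommRing A] [Algebra R A]
    [IsLocalization.Away a A] (I : Ideal R) :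
    I.map (algebraMap R A) = ⊤ ↔ a ∈ I.radical := by
  rw [← not_ne_iff, IsLocalization.map_algebraMap_ne_top_iff_disjoint (Submonoid.powers a),
    Set.not_disjoint_iff, Ideal.mem_radical_iff]
  simp [Submonoid.mem_powers_iff]

theorem map_away_eq_top_iff_forall_isMaximal [IsJacobsonRing R] (a : R) (A : Type*) [CommRing A]
    [Algebra R A] [IsLocalization.Away a A] (I : Ideal R) :
    I.map (algebraMap R A) = ⊤ ↔ ∀ M : Ideal R, M.IsMaximal → I ≤ M → a ∈ M := by
  rw [map_away_eq_top_iff_mem_radical a, Ideal.radical_eq_jacobson, Ideal.jacobson, Ideal.mem_sInf]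
  exact ⟨fun h M hM hIM => h ⟨hIM, hM⟩, fun h M hM => h M hM.2 hM.1⟩

end Localization

theorem isJacobsonRing_int : IsJacobsonRing ℤ := by
  refine isJacobsonRing_iff_prime_eq.mpr fun P hP => ?_
  obtain rfl | hP₀ := eq_or_ne P ⊥
  · refine eq_bot_iff.mpr fun x hx => ?_
    have hunit : IsUnit (x * x + 1) := Ideal.mem_jacobson_bot.mp hx x
    have hx₀ : x = 0 := by
      rcases Int.isUnit_iff.mp hunit with h | h <;> nlinarith
    exact hx₀
  · have := hP.isMaximal hP₀
    exact Ideal.jacobson_eq_self_of_isMaximal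

theorem isMaximal_int_iff {M : Ideal ℤ} :
    M.IsMaximal ↔ ∃ p : ℕ, p.Prime ∧ M = Ideal.span {(p : ℤ)} := by
  constructor
  · intro hM
    have hM₀ : M ≠ ⊥ := Ring.ne_bot_of_isMaximal_of_not_isField hM Int.not_isField
    have hprime := Submodule.IsPrincipal.prime_generator_of_isPrime M hM₀
    refine ⟨_, Int.prime_iff_natAbs_prime.mp hprime, ?_⟩
    rw [Int.span_natAbs, Ideal.span_singleton_generator]
  · rintro ⟨p, hp, rfl⟩
    have : Fact p.Prime := ⟨hp⟩
    exact Int.ideal_span_isMaximal_of_prime p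

theorem span_image_away_factorial_eq_top_iff (n : ℕ) (A : Type*) [CommRing A] [Algebra ℤ A]
    [IsLocalization.Away (n.factorial : ℤ) A] (S : Set ℤ) :
    Ideal.span (algebraMap ℤ A '' S) = ⊤ ↔
      ∀ p : ℕ, p.Prime → n < p → ∃ x ∈ S, ¬ (p : ℤ) ∣ x := by
  have := isJacobsonRing_int
  have hspan (p : ℕ) : Ideal.span S ≤ Ideal.span {(p : ℤ)} ↔ ∀ x ∈ S, (p : ℤ) ∣ x := by
    simp only [Ideal.span_le, Set.subset_def, SetLike.mem_coe, Ideal.mem_span_singleton]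
  have hfactorial {p : ℕ} (hp : p.Prime) :
      (n.factorial : ℤ) ∈ Ideal.span {(p : ℤ)} ↔ p ≤ n := by
    rw [Ideal.mem_span_singleton, Int.natCast_dvd_natCast, hp.dvd_factorial]
  rw [← Ideal.map_span, map_away_eq_top_iff_forall_isMaximal (n.factorial : ℤ)]
  constructor
  · intro h p hp hnp
    by_contra! hdvd
    have hmem := h _ (isMaximal_int_iff.mpr ⟨p, hp, rfl⟩) ((hspan p).mpr hdvd)
    exact hnp.not_ge ((hfactorial hp).mp hmem)
  · intro h M hM hSM
    obtain ⟨p, hp, rfl⟩ := isMaximal_int_iff.mp hM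
    rw [hfactorial hp]
    by_contra! hnp
    obtain ⟨x, hxS, hpx⟩ := h p hp hnp
    exact hpx ((hspan p).mp hSM x hxS)

/-- The element `r_x = x * ∏_{j=1}^{i} (x^j - 1)`. It is defined over any commutative ring so that
the integers `r_k` can be reduced modulo a prime. -/
def mulProdPowSubOne {R : Type*} [CommRing R] (i : ℕ) (x : R) : R :=
  x * ∏ j ∈ Finset.Icc 1 i, (x ^ j - 1)

theorem map_mulProdPowSubOne {R S : Type*} [CommRing R] [CommRing S] (f : R →+* S) (i : ℕ) (x : R) :
    f (mulProdPowSubOne i x) = mulProdPowSubOne i (f x) := by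
  simp [mulProdPowSubOne]

theorem mulProdPowSubOne_ne_zero_of_lt_orderOf {R : Type*} [CommRing R] [IsDomain R] {i : ℕ}
    {u : Rˣ} (hu : i < orderOf u) : mulProdPowSubOne i (u : R) ≠ 0 := by
  refine mul_ne_zero u.ne_zero (Finset.prod_ne_zero_iff.mpr fun j hj => sub_ne_zero.mpr ?_)
  obtain ⟨hj₁, hji⟩ := Finset.mem_Icc.mp hj
  have huj : u ^ j ≠ 1 := pow_ne_one_of_lt_orderOf (by lia) (by lia)
  rwa [← Units.val_pow_eq_pow_val, Ne, Units.val_eq_one]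

theorem exists_mulProdPowSubOne_ne_zero {K : Type*} [Field K] [Finite K] {i : ℕ}
    (hi : i + 1 < Nat.card K) : ∃ x : K, mulProdPowSubOne i x ≠ 0 := by
  obtain ⟨g, hg⟩ := IsCyclic.exists_ofOrder_eq_natCard (α := Kˣ)
  refine ⟨g, mulProdPowSubOne_ne_zero_of_lt_orderOf ?_⟩
  rw [hg, Nat.card_units]
  lia

theorem natCast_dvd_mulProdPowSubOne_iff (p i : ℕ) (k : ℤ) :
    (p : ℤ) ∣ mulProdPowSubOne i k ↔ mulProdPowSubOne i (k : ZMod p) = 0 := by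
  rw [← ZMod.intCast_zmod_eq_zero_iff_dvd]
  exact Eq.congr_left (map_mulProdPowSubOne (Int.castRingHom (ZMod p)) i k)

theorem exists_natCast_zmod_eq_of_lt {n : ℕ} [NeZero n] (m : ℕ) (x : ZMod n) :
    ∃ k : ℕ, m < k ∧ (k : ZMod n) = x := by
  refine ⟨x.val + n * (m + 1), ?_, by simp⟩
  nlinarith [NeZero.pos n]

theorem exists_not_dvd_mulProdPowSubOne {p i : ℕ} (hp : p.Prime) (hip : i + 1 < p) (m : ℕ) :
    ∃ k : ℕ, m < k ∧ ¬ (p : ℤ) ∣ mulProdPowSubOne i (k : ℤ) := by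
  have : Fact p.Prime := ⟨hp⟩
  obtain ⟨x, hx⟩ : ∃ x : ZMod p, mulProdPowSubOne i x ≠ 0 :=
    exists_mulProdPowSubOne_ne_zero (by rwa [Nat.card_zmod])
  obtain ⟨k, hmk, rfl⟩ := exists_natCast_zmod_eq_of_lt m x
  refine ⟨k, hmk, ?_⟩
  rwa [natCast_dvd_mulProdPowSubOne_iff, Int.cast_natCast]

/-- Let `i ≥ 0`. For each integer `k > 1` set
`r_k = k * ∏_{j=1}^{i} (k^j - 1)`. The elements `r_k`, for all integers `k > 1`, generate
the unit ideal of `ℤ[1/(i+1)!]`. Equivalently, for every prime `p > i + 1` there exists an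
integer `k > 1` such that `p` does not divide `k * ∏_{j=1}^{i} (k^j - 1)`. -/
theorem r_k_generate_unit_ideal
    (i : ℕ) :
    Ideal.span {x : Localization.Away ((Nat.factorial (i + 1) : ℤ)) |
        ∃ k : ℕ, 1 < k ∧
          x = algebraMap ℤ (Localization.Away ((Nat.factorial (i + 1) : ℤ)))
            ((k : ℤ) * ∏ j ∈ Finset.Icc 1 i, ((k : ℤ) ^ j - 1))} = ⊤ ∧
    ∀ p : ℕ, p.Prime → i + 1 < p →
      ∃ k : ℕ, 1 < k ∧
        ¬ ((p : ℤ) ∣ (k : ℤ) * ∏ j ∈ Finset.Icc 1 i, ((k : ℤ) ^ j - 1)) := by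
  have exists_k {p : ℕ} (hp : p.Prime) (hip : i + 1 < p) :
      ∃ k : ℕ, 1 < k ∧ ¬ (p : ℤ) ∣ mulProdPowSubOne i (k : ℤ) :=
    exists_not_dvd_mulProdPowSubOne hp hip 1
  let S : Set ℤ := (fun k : ℕ => mulProdPowSubOne i (k : ℤ)) '' Set.Ioi 1
  have hspan : Ideal.span (algebraMap ℤ (Localization.Away ((i + 1).factorial : ℤ)) '' S) = ⊤ := by
    refine (span_image_away_factorial_eq_top_iff (i + 1) _ S).mpr fun p hp hip => ?_
    obtain ⟨k, hk, hpk⟩ := exists_k hp hip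
    exact ⟨_, Set.mem_image_of_mem _ hk, hpk⟩
  refine ⟨top_unique (hspan.ge.trans (Ideal.span_mono ?_)), fun _ => exists_k⟩
  rintro _ ⟨_, ⟨k, hk, rfl⟩, rfl⟩
  exact ⟨k, hk, rfl⟩
end
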